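/- Let Q be a left distributive quasigroup and P a subquasigroup of Q; for a, b ∈ Q write Pa = {p·a : p ∈ P} and Pa·Pb = {(p·a)·(q·b) : p, q ∈ P}. Then: (i) {p·(a·b) : p ∈ P} ⊆ Pa·Pb and |P| ≤ |Pa·Pb| ≤ |P|² for all a, b ∈ Q; (ii) if P is finite, then P is normal in Q if and only if |Pa·Pb| = |P| for all a, b ∈ Q. -/

import Mathlib

/-- A (binary operation on a nonempty set is a) quasigroup: all left and right
translations are bijections. -/
def IsQuasigroup {Q : Type*} (mul : Q → Q → Q) : Prop :=
  Nonempty Q ∧ ∀ a : Q,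
    Function.Bijective (fun x => mul a x) ∧ Function.Bijective (fun x => mul x a)

/-- A subquasigroup: a nonempty subset closed under multiplication and under both
divisions (the unique solutions of `a·x = b` and `y·a = b` for `a, b ∈ P` lie in `P`). -/
def IsSubquasigroup {Q : Type*} (mul : Q → Q → Q) (P : Set Q) : Prop :=
  P.Nonempty ∧ ∀ a ∈ P, ∀ b ∈ P,
    mul a b ∈ P ∧ (∀ x, mul a x = b → x ∈ P) ∧ (∀ y, mul y a = b → y ∈ P)

/-- A normal congruence: an equivalence relation satisfying (C1), (C2), (C3). -/
def IsNormalCongruence {Q : Type*} (mul : Q → Q → Q) (r : Q → Q → Prop) : Prop :=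
  Equivalence r ∧
  (∀ a b c d, r a b → r c d → r (mul a c) (mul b d)) ∧
  (∀ a b c d, r a b → r (mul a c) (mul b d) → r c d) ∧
  (∀ a b c d, r c d → r (mul a c) (mul b d) → r a b)

/-- A subquasigroup is normal if it is an equivalence class of some normal congruence. -/
def IsNormalSubquasigroup {Q : Type*} (mul : Q → Q → Q) (P : Set Q) : Prop :=
  IsSubquasigroup mul P ∧
  ∃ r : Q → Q → Prop, IsNormalCongruence mul r ∧ ∃ a : Q, P = {x | r a x}

/-- A quasigroup is hamiltonian if every subquasigroup is normal. -/
def IsHamiltonian {Q : Type*} (mul : Q → Q → Q) : Prop :=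
  ∀ P : Set Q, IsSubquasigroup mul P → IsNormalSubquasigroup mul P

/-!
By left distributivity `p·(a·b) = (p·a)·(p·b)`, so `P(a·b)` always sits inside `Pa·Pb` as the part
with equal parameters. Since `|P(a·b)| = |P|`, for finite `P` the cardinality condition says exactly
that `Pa·Pb = P(a·b)` for all `a, b`.

A normal congruence with class `P` forces this equality by cancellation. Conversely, suppose `P` is
finite and nonempty and `Pa·Pb ⊆ P(a·b)`. Every coset has `|P|` elements, so translating by a single
element already fills the product: `x·Pb = P(a·b)` for `x ∈ Pa` and `Pa·y = P(a·b)` for `y ∈ Pb`.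
These equalities make distinct cosets disjoint, and the partition into cosets is then a normal
congruence. As `Q` is idempotent, its classes are subquasigroups, and `P` is one of them.
-/

section

open scoped Cardinal

variable {Q : Type*} {mul : Q → Q → Q} {P : Set Q} {a b x y : Q}

namespace IsQuasigroup

theorem mul_right_injective (hQ : IsQuasigroup mul) (a : Q) : Function.Injective (mul a) :=
  (hQ.2 a).1.1

theorem mul_right_surjective (hQ : IsQuasigroup mul) (a : Q) : Function.Surjective (mul a) :=
  (hQ.2 a).1.2

theorem mul_left_injective (hQ : IsQuasigroup mul) (a : Q) :
    Function.Injective fun x => mul x a :=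
  (hQ.2 a).2.1

theorem mul_left_surjective (hQ : IsQuasigroup mul) (a : Q) :
    Function.Surjective fun x => mul x a :=
  (hQ.2 a).2.2

end IsQuasigroup

theorem mul_self_of_left_distrib (hR : ∀ a, Function.Injective fun x => mul x a)
    (hld : ∀ x a b, mul x (mul a b) = mul (mul x a) (mul x b)) (x : Q) : mul x x = x :=
  (hR (mul x x) (hld x x x)).symm

/-- The right coset `Pa = {p·a : p ∈ P}` of a subset `P` of a magma. Mathlib's
`MulOpposite.op a • P` is not available, since the operation is not a `Mul` instance. -/
def rightCoset (mul : Q → Q → Q) (P : Set Q) (a : Q) : Set Q := (fun p => mul p a) '' P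

theorem image2_rightCoset (a b : Q) :
    Set.image2 mul (rightCoset mul P a) (rightCoset mul P b) =
      Set.image2 (fun p q => mul (mul p a) (mul q b)) P P := by
  rw [rightCoset, rightCoset, Set.image2_image_left, Set.image2_image_right]

theorem mk_rightCoset (hR : Function.Injective fun x => mul x a) :
    #(rightCoset mul P a) = #P :=
  Cardinal.mk_image_eq hR

theorem ncard_rightCoset (hR : Function.Injective fun x => mul x a) :
    (rightCoset mul P a).ncard = P.ncard :=
  Set.ncard_image_of_injective P hR

theorem rightCoset_mul_subset_image2
    (hld : ∀ x a b, mul x (mul a b) = mul (mul x a) (mul x b)) (a b : Q) :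
    rightCoset mul P (mul a b) ⊆ Set.image2 mul (rightCoset mul P a) (rightCoset mul P b) := by
  rintro _ ⟨p, hp, rfl⟩
  exact ⟨mul p a, ⟨p, hp, rfl⟩, mul p b, ⟨p, hp, rfl⟩, (hld p a b).symm⟩

theorem exists_mem_rightCoset (hne : P.Nonempty) (hsurj : ∀ a, Function.Surjective (mul a))
    (x : Q) : ∃ a, x ∈ rightCoset mul P a := by
  obtain ⟨p, hp⟩ := hne
  obtain ⟨a, ha⟩ := hsurj p x
  exact ⟨a, p, hp, ha⟩

/-- The condition that a product of elements of `Pa` and `Pb` lies in `P(a·b)`. For finite `P` it is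
what the cardinality condition amounts to, and what makes the right cosets the classes of a normal
congruence. Only this inclusion is asked for: the other one is left distributivity. -/
def RightCosetsMulClosed (mul : Q → Q → Q) (P : Set Q) : Prop :=
  ∀ a b, Set.image2 mul (rightCoset mul P a) (rightCoset mul P b) ⊆ rightCoset mul P (mul a b)

theorem rightCosetsMulClosed_of_ncard_le (hfin : P.Finite)
    (hR : ∀ a, Function.Injective fun x => mul x a)
    (hld : ∀ x a b, mul x (mul a b) = mul (mul x a) (mul x b))
    (hcard : ∀ a b,
      (Set.image2 mul (rightCoset mul P a) (rightCoset mul P b)).ncard ≤ P.ncard) :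
    RightCosetsMulClosed mul P := fun a b =>
  (Set.eq_of_subset_of_ncard_le (rightCoset_mul_subset_image2 hld a b)
    ((hcard a b).trans_eq (ncard_rightCoset (hR _)).symm)
    ((hfin.image _).image2 _ (hfin.image _))).ge

namespace IsNormalCongruence

variable {r : Q → Q → Prop}

theorem rightCosetsMulClosed_class (hr : IsNormalCongruence mul r)
    (hsurj : ∀ a, Function.Surjective fun x => mul x a)
    (hld : ∀ x a b, mul x (mul a b) = mul (mul x a) (mul x b)) (e : Q) :
    RightCosetsMulClosed mul {x | r e x} := by
  obtain ⟨hequiv, hmul, -, hcancel⟩ := hr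
  rintro a b _ ⟨_, ⟨p, hp, rfl⟩, _, ⟨q, hq, rfl⟩, rfl⟩
  obtain ⟨y, hy : mul y (mul a b) = mul (mul p a) (mul q b)⟩ :=
    hsurj (mul a b) (mul (mul p a) (mul q b))
  have hpq : r p q := hequiv.trans (hequiv.symm hp) hq
  have hprod : r (mul p (mul a b)) (mul y (mul a b)) := by
    rw [hy, hld]
    exact hmul _ _ _ _ (hequiv.refl _) (hmul _ _ _ _ hpq (hequiv.refl b))
  have hpy : r p y := hcancel _ _ _ _ (hequiv.refl _) hprod
  exact ⟨y, hequiv.trans hp hpy, hy⟩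

theorem isSubquasigroup_class (hr : IsNormalCongruence mul r) (hidem : ∀ x, mul x x = x) (e : Q) :
    IsSubquasigroup mul {x | r e x} := by
  obtain ⟨hequiv, hmul, hcancel_left, hcancel_right⟩ := hr
  refine ⟨⟨e, hequiv.refl e⟩,
    fun a (ha : r e a) b (hb : r e b) => ⟨?_, fun x hx => ?_, fun y hy => ?_⟩⟩
  · have hee : r (mul e e) (mul a b) := hmul _ _ _ _ ha hb
    rwa [hidem] at hee
  · exact hcancel_left e a e x ha (by rwa [hidem, hx])
  · exact hcancel_right e y e a ha (by rwa [hidem, hy])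

end IsNormalCongruence

theorem IsNormalSubquasigroup.image2_rightCoset_eq_rightCoset (hP : IsNormalSubquasigroup mul P)
    (hsurj : ∀ a, Function.Surjective fun x => mul x a)
    (hld : ∀ x a b, mul x (mul a b) = mul (mul x a) (mul x b)) (a b : Q) :
    Set.image2 mul (rightCoset mul P a) (rightCoset mul P b) = rightCoset mul P (mul a b) := by
  obtain ⟨-, r, hr, e, rfl⟩ := hP
  exact (hr.rightCosetsMulClosed_class hsurj hld e a b).antisymm
    (rightCoset_mul_subset_image2 hld a b)

namespace RightCosetsMulClosed

theorem image_mul_left (hmul : RightCosetsMulClosed mul P) (hfin : P.Finite)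
    (hL : Function.Injective (mul x)) (hR : ∀ a, Function.Injective fun x => mul x a)
    (hx : x ∈ rightCoset mul P a) (b : Q) :
    mul x '' rightCoset mul P b = rightCoset mul P (mul a b) := by
  refine Set.eq_of_subset_of_ncard_le ((Set.image_subset_image2_right hx).trans (hmul a b)) ?_
    (hfin.image _)
  rw [Set.ncard_image_of_injective _ hL, ncard_rightCoset (hR _), ncard_rightCoset (hR _)]

theorem image_mul_right (hmul : RightCosetsMulClosed mul P) (hfin : P.Finite)
    (hR : ∀ a, Function.Injective fun x => mul x a) (a : Q) (hy : y ∈ rightCoset mul P b) :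
    (fun x => mul x y) '' rightCoset mul P a = rightCoset mul P (mul a b) := by
  refine Set.eq_of_subset_of_ncard_le ((Set.image_subset_image2_left hy).trans (hmul a b)) ?_
    (hfin.image _)
  rw [Set.ncard_image_of_injective _ (hR y), ncard_rightCoset (hR _), ncard_rightCoset (hR _)]

theorem rightCoset_eq_of_mem (hmul : RightCosetsMulClosed mul P) (hfin : P.Finite)
    (hne : P.Nonempty) (hL : Function.Injective (mul x))
    (hR : ∀ a, Function.Injective fun x => mul x a)
    (ha : x ∈ rightCoset mul P a) (hb : x ∈ rightCoset mul P b) :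
    rightCoset mul P a = rightCoset mul P b := by
  obtain ⟨d, hd⟩ := hne
  have hy : mul d d ∈ rightCoset mul P d := ⟨d, hd, rfl⟩
  apply (hR (mul d d)).image_injective
  calc (fun z => mul z (mul d d)) '' rightCoset mul P a
      _ = rightCoset mul P (mul a d) := hmul.image_mul_right hfin hR a hy
      _ = mul x '' rightCoset mul P d := (hmul.image_mul_left hfin hL hR ha d).symm
      _ = rightCoset mul P (mul b d) := hmul.image_mul_left hfin hL hR hb d
      _ = (fun z => mul z (mul d d)) '' rightCoset mul P b :=
        (hmul.image_mul_right hfin hR b hy).symm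

end RightCosetsMulClosed

/-- The relation of lying in a common right coset of `P`. It need not be
transitive in general. The coset is existentially quantified because `x ∈ Px` may fail. -/
def SameRightCoset (mul : Q → Q → Q) (P : Set Q) (x y : Q) : Prop :=
  ∃ a, x ∈ rightCoset mul P a ∧ y ∈ rightCoset mul P a

theorem IsQuasigroup.isNormalCongruence_sameRightCoset (hQ : IsQuasigroup mul) (hfin : P.Finite)
    (hne : P.Nonempty) (hmul : RightCosetsMulClosed mul P) :
    IsNormalCongruence mul (SameRightCoset mul P) := by
  have hL := hQ.mul_right_injective
  have hR := hQ.mul_left_injective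
  have hcover := exists_mem_rightCoset hne hQ.mul_right_surjective
  have heq {x a b : Q} (ha : x ∈ rightCoset mul P a) (hb : x ∈ rightCoset mul P b) :
      rightCoset mul P a = rightCoset mul P b :=
    hmul.rightCoset_eq_of_mem hfin hne (hL x) hR ha hb
  have hmem {a b x y : Q} (hx : x ∈ rightCoset mul P a) (hy : y ∈ rightCoset mul P b) :
      mul x y ∈ rightCoset mul P (mul a b) :=
    hmul a b (Set.mem_image2_of_mem hx hy)
  refine ⟨⟨fun x => ?_, ?_, ?_⟩, ?_, ?_, ?_⟩
  · obtain ⟨a, ha⟩ := hcover x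
    exact ⟨a, ha, ha⟩
  · rintro x y ⟨a, hx, hy⟩
    exact ⟨a, hy, hx⟩
  · rintro x y z ⟨a, hx, hy⟩ ⟨b, hy', hz⟩
    exact ⟨a, hx, heq hy' hy ▸ hz⟩
  · rintro x y u v ⟨a, hx, hy⟩ ⟨b, hu, hv⟩
    exact ⟨mul a b, hmem hx hu, hmem hy hv⟩
  · rintro x y u v ⟨a, hx, hy⟩ ⟨c, hxu, hyv⟩
    obtain ⟨b, hu⟩ := hcover u
    rw [heq hxu (hmem hx hu), ← hmul.image_mul_left hfin (hL y) hR hy b,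
      (hL y).mem_set_image] at hyv
    exact ⟨b, hu, hyv⟩
  · rintro x y u v ⟨b, hu, hv⟩ ⟨c, hxu, hyv⟩
    obtain ⟨a, hx⟩ := hcover x
    rw [heq hxu (hmem hx hu), ← hmul.image_mul_right hfin hR a hv] at hyv
    exact ⟨a, hx, (hR v).mem_set_image.1 hyv⟩

theorem IsQuasigroup.isNormalSubquasigroup_of_rightCosetsMulClosed (hQ : IsQuasigroup mul)
    (hidem : ∀ x, mul x x = x) (hfin : P.Finite) (hne : P.Nonempty)
    (hmul : RightCosetsMulClosed mul P) :
    IsNormalSubquasigroup mul P := by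
  have hr := hQ.isNormalCongruence_sameRightCoset hfin hne hmul
  have hR := hQ.mul_left_injective
  obtain ⟨e, he⟩ := hne
  have hee : e ∈ rightCoset mul P e := ⟨e, he, hidem e⟩
  have hclass : {x | SameRightCoset mul P e x} = rightCoset mul P e := by
    refine Set.Subset.antisymm ?_ fun x hx => ⟨e, hee, hx⟩
    rintro x ⟨a, hea, hxa⟩
    rwa [hmul.rightCoset_eq_of_mem hfin ⟨e, he⟩ (hQ.mul_right_injective e) hR hee hea]
  have hsub : P ⊆ rightCoset mul P e := fun p hp =>
    hclass ▸ hr.2.2.2 e p e e (hr.1.refl e) ⟨e, ⟨e, he, rfl⟩, ⟨p, hp, rfl⟩⟩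
  have hP : P = {x | SameRightCoset mul P e x} := by
    rw [hclass]
    exact Set.eq_of_subset_of_ncard_le hsub (ncard_rightCoset (hR e)).le (hfin.image _)
  exact ⟨hP ▸ hr.isSubquasigroup_class hidem e, _, hr, e, hP⟩

theorem subquasigroup_coset_cardinalities_general (hQ : IsQuasigroup mul)
    (hld : ∀ x a b : Q, mul x (mul a b) = mul (mul x a) (mul x b)) (hP : P.Nonempty) :
    (∀ a b : Q,
      (fun p => mul p (mul a b)) '' P ⊆ Set.image2 (fun p q => mul (mul p a) (mul q b)) P P ∧
      #P ≤ #(Set.image2 (fun p q => mul (mul p a) (mul q b)) P P) ∧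
      #(Set.image2 (fun p q => mul (mul p a) (mul q b)) P P) ≤ #P ^ 2) ∧
    (IsNormalSubquasigroup mul P →
      ∀ a b : Q, #(Set.image2 (fun p q => mul (mul p a) (mul q b)) P P) = #P) ∧
    (P.Finite →
      (∀ a b : Q, (Set.image2 (fun p q => mul (mul p a) (mul q b)) P P).ncard = P.ncard) →
      IsNormalSubquasigroup mul P) := by
  have hR := hQ.mul_left_injective
  simp only [← image2_rightCoset]
  refine ⟨fun a b => ⟨rightCoset_mul_subset_image2 hld a b, ?_, ?_⟩, fun hnormal a b => ?_,
    fun hfin hcard => ?_⟩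
  · rw [← mk_rightCoset (hR (mul a b))]
    exact Cardinal.mk_le_mk_of_subset (rightCoset_mul_subset_image2 hld a b)
  · rw [pow_two, image2_rightCoset]
    exact Cardinal.mk_image2_le
  · rw [hnormal.image2_rightCoset_eq_rightCoset hQ.mul_left_surjective hld, mk_rightCoset (hR _)]
  · have hmul := rightCosetsMulClosed_of_ncard_le hfin hR hld fun a b => (hcard a b).le
    exact hQ.isNormalSubquasigroup_of_rightCosetsMulClosed (mul_self_of_left_distrib hR hld)
      hfin hP hmul

end

/-- For a subquasigroup `P` of a left distributive quasigroup `Q`, writing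
`Pa·Pb = {(p·a)·(q·b) : p, q ∈ P}`:
(i) `P·(a·b) ⊆ Pa·Pb` and `|P| ≤ |Pa·Pb| ≤ |P|²` for all `a, b`;
(ii) if `P` is finite, then `P` is normal iff `|Pa·Pb| = |P|` for all `a, b`. -/
theorem subquasigroup_coset_cardinalities {Q : Type*} (mul : Q → Q → Q)
    (hQ : IsQuasigroup mul)
    (hld : ∀ x a b : Q, mul x (mul a b) = mul (mul x a) (mul x b))
    (P : Set Q) (hP : IsSubquasigroup mul P) :
    (∀ a b : Q,
      (fun p => mul p (mul a b)) '' P ⊆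
          Set.image2 (fun p q => mul (mul p a) (mul q b)) P P ∧
      Cardinal.mk ↥P ≤ Cardinal.mk ↥(Set.image2 (fun p q => mul (mul p a) (mul q b)) P P) ∧
      Cardinal.mk ↥(Set.image2 (fun p q => mul (mul p a) (mul q b)) P P) ≤ Cardinal.mk ↥P ^ 2) ∧
    (P.Finite →
      (IsNormalSubquasigroup mul P ↔
        ∀ a b : Q, (Set.image2 (fun p q => mul (mul p a) (mul q b)) P P).ncard = P.ncard)) := by
  obtain ⟨hbounds, hnormal, hconverse⟩ := subquasigroup_coset_cardinalities_general hQ hld hP.1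
  exact ⟨hbounds, fun hfin =>
    ⟨fun h a b => Set.ncard_congr' (Cardinal.eq.1 (hnormal h a b)).some, hconverse hfin⟩⟩
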